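/- Let k-r ≥ 1 be odd with r·k even. If a graph G contains r pairwise edge-disjoint matchings each of size (k-r+1)/2, then G is optimally (r,k)-extendable, i.e., N_{r,k}(G) = (3/2)·r·(k-r+1). -/

import Mathlib

open SimpleGraph

def IsExtension (n r k : ℕ) (G : SimpleGraph (Fin n)) (H : SimpleGraph (Fin (n + r))) : Prop :=
  (∀ i : Fin n, (H.neighborSet (Fin.castAdd r i)).ncard = (G.neighborSet i).ncard) ∧
  (∀ j : Fin r, (H.neighborSet (Fin.natAdd n j)).ncard = k)

def E1 (n r : ℕ) (H : SimpleGraph (Fin (n + r))) : Set (Sym2 (Fin (n + r))) :=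
  {e | e ∈ H.edgeSet ∧ ∃ i : Fin n, Fin.castAdd r i ∈ e}

def oldEdges (n r : ℕ) (G : SimpleGraph (Fin n)) : Set (Sym2 (Fin (n + r))) :=
  Sym2.map (Fin.castAdd r) '' G.edgeSet

noncomputable def editCost (n r : ℕ) (G : SimpleGraph (Fin n)) (H : SimpleGraph (Fin (n + r))) : ℕ :=
  (oldEdges n r G \ E1 n r H).ncard + (E1 n r H \ oldEdges n r G).ncard

noncomputable def editNumber (n r k : ℕ) (G : SimpleGraph (Fin n)) : ℕ∞ :=
  sInf ((fun H => (editCost n r G H : ℕ∞)) '' {H | IsExtension n r k G H})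

def IsMatchingSet {V : Type*} (G : SimpleGraph V) (m : ℕ) (M : Set (Sym2 V)) : Prop :=
  M ⊆ G.edgeSet ∧ M.ncard = m ∧ ∀ e ∈ M, ∀ f ∈ M, e ≠ f → ∀ v, v ∈ e → v ∉ f

/-
Let `c` be the number of edges of an extension `H` between old and new vertices, and let `A` be the
set of its edges between old vertices. Since old vertices keep their degree, `2 |A| + c = 2 |E(G)|`,
so the edit cost `|E(G) \ A| + |A \ E(G)| + c` is half of `3 c + 4 |A \ E(G)|`. The new vertices
have degree `k` and at most `r - 1` new neighbours each, so `c ≥ r (k - r + 1)`. The resulting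
bounds `3 c / 2` for the cost and `r (k - r + 1)` for `c` are attained when `A ⊆ E(G)` and the new
vertices form a clique. Deleting the matchings and joining the endpoints of the `i`-th one to the
`i`-th new vertex gives such an extension.
-/

section Relations

variable {α β : Type*}

lemma ncard_setOf_prod [Fintype α] [Finite β] (R : α → β → Prop) :
    {p : α × β | R p.1 p.2}.ncard = ∑ a, {b | R a b}.ncard :=
  (Nat.card_congr (Equiv.subtypeProdEquivSigmaSubtype R)).trans Nat.card_sigma

lemma ncard_setOf_exists_eq_of_biUnique {R : α → β → Prop} (hR : Relator.BiUnique R) :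
    {a | ∃ b, R a b}.ncard = {b | ∃ a, R a b}.ncard := by
  have fst_injOn : Set.InjOn Prod.fst {p : α × β | R p.1 p.2} := fun p hp q hq h =>
    Prod.ext h (hR.2 hp (h ▸ hq))
  have snd_injOn : Set.InjOn Prod.snd {p : α × β | R p.1 p.2} := fun p hp q hq h =>
    Prod.ext (hR.1 hp (h ▸ hq)) h
  have fst_image : Prod.fst '' {p : α × β | R p.1 p.2} = {a | ∃ b, R a b} := by ext; simp
  have snd_image : Prod.snd '' {p : α × β | R p.1 p.2} = {b | ∃ a, R a b} := by ext; simp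
  rw [← fst_image, ← snd_image, fst_injOn.ncard_image, snd_injOn.ncard_image]

end Relations

section EdgeCount

lemma ncard_neighborSet_comap_equiv {V W : Type*} (e : V ≃ W) (G : SimpleGraph W) (v : V) :
    ((G.comap e).neighborSet v).ncard = (G.neighborSet (e v)).ncard :=
  Nat.card_congr ((Iso.comap e G).mapNeighborSet v)

variable {V : Type*} [Fintype V]

lemma sum_ncard_neighborSet (G : SimpleGraph V) :
    ∑ v, (G.neighborSet v).ncard = 2 * G.edgeSet.ncard := by
  classical
  simp only [Set.ncard_eq_toFinset_card', ← neighborFinset_def, card_neighborFinset_eq_degree,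
    ← edgeFinset.eq_1, sum_degrees_eq_twice_card_edges]

lemma ncard_neighborSet_lt_card (G : SimpleGraph V) (v : V) :
    (G.neighborSet v).ncard < Fintype.card V := by
  rw [← Nat.card_eq_fintype_card]
  exact Set.ncard_lt_card (Set.ne_univ_iff_exists_notMem _ |>.2 ⟨v, G.irrefl⟩)

lemma ncard_neighborSet_top_add_one (v : V) :
    ((⊤ : SimpleGraph V).neighborSet v).ncard + 1 = Fintype.card V := by
  rw [neighborSet_top, ← Nat.card_eq_fintype_card, ← Set.ncard_add_ncard_compl {v},
    Set.ncard_singleton, add_comm]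

lemma two_mul_ncard_edgeSet_add_card_le (G : SimpleGraph V) :
    2 * G.edgeSet.ncard + Fintype.card V ≤ Fintype.card V * Fintype.card V :=
  calc 2 * G.edgeSet.ncard + Fintype.card V = ∑ v, ((G.neighborSet v).ncard + 1) := by
        simp [Finset.sum_add_distrib, sum_ncard_neighborSet]
    _ ≤ ∑ _v : V, Fintype.card V := Finset.sum_le_sum fun v _ => ncard_neighborSet_lt_card G v
    _ = Fintype.card V * Fintype.card V := by simp

lemma two_mul_ncard_edgeSet_top_add_card :
    2 * (⊤ : SimpleGraph V).edgeSet.ncard + Fintype.card V = Fintype.card V * Fintype.card V :=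
  calc 2 * (⊤ : SimpleGraph V).edgeSet.ncard + Fintype.card V
      = ∑ v, (((⊤ : SimpleGraph V).neighborSet v).ncard + 1) := by
        rw [Finset.sum_add_distrib, sum_ncard_neighborSet]
        simp
    _ = Fintype.card V * Fintype.card V := by
        simp only [ncard_neighborSet_top_add_one, Finset.sum_const, Finset.card_univ, smul_eq_mul]

end EdgeCount

section CrossEdges

variable {U V W : Type*} (H : SimpleGraph U) {f : V → U} {g : W → U}

/-- The edges of `H` with one endpoint in the range of `f` and the other in the range of `g`. The
two parts of the vertex set are given by maps rather than by sets because the old and the new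
vertices of an extension are the images of `Fin.castAdd` and `Fin.natAdd`. -/
def crossEdges (f : V → U) (g : W → U) : Set (Sym2 U) :=
  {e ∈ H.edgeSet | ∃ v w, s(f v, g w) = e}

lemma crossEdges_comm : crossEdges H f g = crossEdges H g f := by
  simp only [crossEdges, Sym2.eq_swap (a := f _), exists_comm (α := V)]

section

variable (hf : f.Injective) (hg : g.Injective) (hfg : Disjoint (Set.range f) (Set.range g))
include hf hg hfg

lemma ncard_crossEdges [Fintype V] [Finite W] :
    (crossEdges H f g).ncard = ∑ v, {w | H.Adj (f v) (g w)}.ncard := by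
  have endpoints_injective : Function.Injective fun p : V × W => s(f p.1, g p.2) := by
    rintro ⟨v, w⟩ ⟨v', w'⟩ h
    obtain ⟨hv, hw⟩ | ⟨hv, -⟩ := Sym2.eq_iff.1 h
    · exact Prod.ext (hf hv) (hg hw)
    · exact absurd hv (Set.disjoint_range_iff.1 hfg v w')
  have image_eq : (fun p : V × W => s(f p.1, g p.2)) '' {p | H.Adj (f p.1) (g p.2)} =
      crossEdges H f g := by
    ext e
    constructor
    · rintro ⟨p, hp, rfl⟩
      exact ⟨hp, p.1, p.2, rfl⟩
    · rintro ⟨he, v, w, rfl⟩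
      exact ⟨(v, w), he, rfl⟩
  rw [← image_eq, Set.ncard_image_of_injective _ endpoints_injective,
    ncard_setOf_prod fun v w => H.Adj (f v) (g w)]

end

section

variable (hfg : IsCompl (Set.range f) (Set.range g))
include hfg

lemma setOf_mem_edgeSet_and_exists_mem_eq_union :
    {e | e ∈ H.edgeSet ∧ ∃ v, f v ∈ e} =
      Sym2.map f '' (H.comap f).edgeSet ∪ crossEdges H f g := by
  ext e
  constructor
  · rintro ⟨he, v, hv⟩
    obtain ⟨u, rfl⟩ := Sym2.mem_iff_exists.1 hv
    have range_union : Set.range f ∪ Set.range g = Set.univ := codisjoint_iff.1 hfg.codisjoint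
    obtain ⟨v', rfl⟩ | ⟨w, rfl⟩ : u ∈ Set.range f ∪ Set.range g := range_union ▸ Set.mem_univ u
    · exact Or.inl ⟨s(v, v'), he, rfl⟩
    · exact Or.inr ⟨he, v, w, rfl⟩
  · rintro (⟨⟨v, v'⟩, he, rfl⟩ | ⟨he, v, w, rfl⟩)
    · exact ⟨he, v, Sym2.mem_mk_left _ _⟩
    · exact ⟨he, v, Sym2.mem_mk_left _ _⟩

variable (hf : f.Injective) (hg : g.Injective)
include hf hg

lemma ncard_neighborSet_eq_add [Finite V] [Finite W] (u : U) :
    (H.neighborSet u).ncard = {v | H.Adj u (f v)}.ncard + {w | H.Adj u (g w)}.ncard := by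
  have range_union : Set.range f ∪ Set.range g = Set.univ := codisjoint_iff.1 hfg.codisjoint
  have union_eq : f '' {v | H.Adj u (f v)} ∪ g '' {w | H.Adj u (g w)} = H.neighborSet u := by
    change f '' (f ⁻¹' H.neighborSet u) ∪ g '' (g ⁻¹' H.neighborSet u) = H.neighborSet u
    rw [Set.image_preimage_eq_inter_range, Set.image_preimage_eq_inter_range,
      ← Set.inter_union_distrib_left, range_union, Set.inter_univ]
  rw [← union_eq, Set.ncard_union_eq, Set.ncard_image_of_injective _ hf,
    Set.ncard_image_of_injective _ hg]
  exact hfg.disjoint.mono (Set.image_subset_range _ _) (Set.image_subset_range _ _)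

lemma sum_ncard_neighborSet_comp [Fintype V] [Finite W] :
    ∑ v, (H.neighborSet (f v)).ncard =
      2 * (H.comap f).edgeSet.ncard + (crossEdges H f g).ncard := by
  simp only [ncard_neighborSet_eq_add H hfg hf hg, Finset.sum_add_distrib]
  rw [← sum_ncard_neighborSet, ncard_crossEdges H hf hg hfg.disjoint]
  rfl

end

lemma disjoint_map_image_crossEdges (S : Set (Sym2 V))
    (hfg : Disjoint (Set.range f) (Set.range g)) :
    Disjoint (Sym2.map f '' S) (crossEdges H f g) := by
  rw [Set.disjoint_left]
  rintro _ ⟨e, -, rfl⟩ ⟨-, v, w, h⟩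
  obtain ⟨v', -, hv'⟩ := Sym2.mem_map.1 (h ▸ Sym2.mem_mk_right (f v) (g w))
  exact Set.disjoint_range_iff.1 hfg v' w hv'

end CrossEdges

section Extension

variable {n r k : ℕ} {G : SimpleGraph (Fin n)}

lemma isCompl_range_castAdd_range_natAdd (n r : ℕ) :
    IsCompl (Set.range (Fin.castAdd (n := n) r)) (Set.range (Fin.natAdd (m := r) n)) := by
  have range_castAdd :
      Set.range (Fin.castAdd (n := n) r) = finSumFinEquiv '' Set.range Sum.inl := by
    simp only [← Set.range_comp, Function.comp_def, finSumFinEquiv_apply_left]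
  have range_natAdd :
      Set.range (Fin.natAdd (m := r) n) = finSumFinEquiv '' Set.range Sum.inr := by
    simp only [← Set.range_comp, Function.comp_def, finSumFinEquiv_apply_right]
  rw [range_castAdd, range_natAdd]
  exact finSumFinEquiv.toOrderIsoSet.isCompl Set.isCompl_range_inl_range_inr

lemma editCost_eq (G : SimpleGraph (Fin n)) (H : SimpleGraph (Fin (n + r))) :
    editCost n r G H = (G.edgeSet \ (H.comap (Fin.castAdd r)).edgeSet).ncard +
      (((H.comap (Fin.castAdd r)).edgeSet \ G.edgeSet).ncard +
        (crossEdges H (Fin.castAdd r) (Fin.natAdd n)).ncard) := by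
  set A := (H.comap (Fin.castAdd r)).edgeSet
  set C := crossEdges H (Fin.castAdd r) (Fin.natAdd n)
  have hcompl := isCompl_range_castAdd_range_natAdd n r
  have map_injective : Function.Injective (Sym2.map (Fin.castAdd (n := n) r)) :=
    Sym2.map.injective (Fin.castAdd_injective n r)
  have disjoint_cross (S : Set (Sym2 (Fin n))) : Disjoint (Sym2.map (Fin.castAdd r) '' S) C :=
    disjoint_map_image_crossEdges H S hcompl.disjoint
  have E1_eq : E1 n r H = Sym2.map (Fin.castAdd r) '' A ∪ C :=
    setOf_mem_edgeSet_and_exists_mem_eq_union H hcompl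
  have removed_eq : oldEdges n r G \ E1 n r H = Sym2.map (Fin.castAdd r) '' (G.edgeSet \ A) := by
    rw [E1_eq, oldEdges, ← Set.sdiff_sdiff, ← Set.image_sdiff map_injective,
      (disjoint_cross _).sdiff_eq_left]
  have added_eq : E1 n r H \ oldEdges n r G = Sym2.map (Fin.castAdd r) '' (A \ G.edgeSet) ∪ C := by
    rw [E1_eq, oldEdges, Set.union_sdiff_distrib, ← Set.image_sdiff map_injective,
      (disjoint_cross _).symm.sdiff_eq_left]
  rw [editCost, removed_eq, added_eq, Set.ncard_union_eq (disjoint_cross _),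
    Set.ncard_image_of_injective _ map_injective, Set.ncard_image_of_injective _ map_injective]

namespace IsExtension

variable {H : SimpleGraph (Fin (n + r))} (h : IsExtension n r k G H)
include h

lemma two_mul_ncard_edgeSet_comap_castAdd_add_ncard_crossEdges :
    2 * (H.comap (Fin.castAdd r)).edgeSet.ncard +
      (crossEdges H (Fin.castAdd r) (Fin.natAdd n)).ncard = 2 * G.edgeSet.ncard := by
  rw [← sum_ncard_neighborSet_comp H (isCompl_range_castAdd_range_natAdd n r)
    (Fin.castAdd_injective n r) (Fin.natAdd_injective r n), ← sum_ncard_neighborSet]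
  exact Finset.sum_congr rfl fun v _ => h.1 v

lemma two_mul_ncard_edgeSet_comap_natAdd_add_ncard_crossEdges :
    2 * (H.comap (Fin.natAdd n)).edgeSet.ncard +
      (crossEdges H (Fin.castAdd r) (Fin.natAdd n)).ncard = r * k := by
  rw [crossEdges_comm, ← sum_ncard_neighborSet_comp H
    (isCompl_range_castAdd_range_natAdd n r).symm (Fin.natAdd_injective r n)
    (Fin.castAdd_injective n r)]
  simp [h.2]

lemma two_mul_editCost :
    2 * editCost n r G H = 3 * (crossEdges H (Fin.castAdd r) (Fin.natAdd n)).ncard +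
      4 * ((H.comap (Fin.castAdd r)).edgeSet \ G.edgeSet).ncard := by
  have balance := h.two_mul_ncard_edgeSet_comap_castAdd_add_ncard_crossEdges
  have removed := Set.ncard_sdiff_add_ncard G.edgeSet (H.comap (Fin.castAdd r)).edgeSet
  have added := Set.ncard_sdiff_add_ncard (H.comap (Fin.castAdd r)).edgeSet G.edgeSet
  rw [Set.union_comm] at added
  rw [editCost_eq]
  omega

-- This is `c ≥ r (k + 1 - r)`, with `r * r` moved across so that no truncated subtraction occurs.
lemma mul_add_one_le_ncard_crossEdges_add :
    r * (k + 1) ≤ (crossEdges H (Fin.castAdd r) (Fin.natAdd n)).ncard + r * r := by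
  have degree_sum := h.two_mul_ncard_edgeSet_comap_natAdd_add_ncard_crossEdges
  have clique_bound := two_mul_ncard_edgeSet_add_card_le (H.comap (Fin.natAdd n))
  rw [Fintype.card_fin] at clique_bound
  rw [mul_add_one]
  omega

lemma ncard_crossEdges_add_eq_of_comap_natAdd_eq_top (htop : H.comap (Fin.natAdd n) = ⊤) :
    (crossEdges H (Fin.castAdd r) (Fin.natAdd n)).ncard + r * r = r * (k + 1) := by
  have degree_sum := h.two_mul_ncard_edgeSet_comap_natAdd_add_ncard_crossEdges
  have clique_count := two_mul_ncard_edgeSet_top_add_card (V := Fin r)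
  rw [htop] at degree_sum
  rw [Fintype.card_fin] at clique_count
  rw [mul_add_one]
  omega

lemma three_mul_le_two_mul_editCost_add :
    3 * (r * (k + 1)) ≤ 2 * editCost n r G H + 3 * (r * r) := by
  have cost := h.two_mul_editCost
  have cross := h.mul_add_one_le_ncard_crossEdges_add
  omega

lemma two_mul_editCost_add_eq (hold : H.comap (Fin.castAdd r) ≤ G)
    (hnew : H.comap (Fin.natAdd n) = ⊤) :
    2 * editCost n r G H + 3 * (r * r) = 3 * (r * (k + 1)) := by
  have cost := h.two_mul_editCost
  have cross := h.ncard_crossEdges_add_eq_of_comap_natAdd_eq_top hnew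
  rw [Set.sdiff_eq_empty.2 (edgeSet_mono hold), Set.ncard_empty] at cost
  omega

lemma editNumber_eq_three_mul (hold : H.comap (Fin.castAdd r) ≤ G)
    (hnew : H.comap (Fin.natAdd n) = ⊤) {m : ℕ} (hk : k + 1 = 2 * m + r) :
    editNumber n r k G = (3 * (r * m) : ℕ) := by
  have degree_count : r * (k + 1) = 2 * (r * m) + r * r := by rw [hk]; ring
  have cost : editCost n r G H = 3 * (r * m) := by
    have twice_cost := h.two_mul_editCost_add_eq hold hnew
    omega
  have cost_le (H' : SimpleGraph (Fin (n + r))) (h' : IsExtension n r k G H') :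
      3 * (r * m) ≤ editCost n r G H' := by
    have twice_cost_le := h'.three_mul_le_two_mul_editCost_add
    omega
  refine IsLeast.csInf_eq ⟨⟨H, h, congrArg _ cost⟩, ?_⟩
  rintro _ ⟨H', h', rfl⟩
  exact Nat.cast_le.2 (cost_le H' h')

end IsExtension

end Extension

section Matchings

variable {V ι : Type*} {G : SimpleGraph V}

/-- The vertices covered by a set of edges. -/
def coveredVertices (N : Set (Sym2 V)) : Set V :=
  {v | ∃ w, s(v, w) ∈ N}

namespace IsMatchingSet

variable {m : ℕ} {N : Set (Sym2 V)} (hN : IsMatchingSet G m N)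
include hN

lemma eq_of_mk_mem {v w w' : V} (hw : s(v, w) ∈ N) (hw' : s(v, w') ∈ N) : w = w' := by
  by_contra hne
  exact hN.2.2 _ hw _ hw' (mt Sym2.congr_right.1 hne) v (Sym2.mem_mk_left _ _)
    (Sym2.mem_mk_left _ _)

lemma ncard_coveredVertices [Finite V] : (coveredVertices N).ncard = 2 * m := by
  have biUnion_eq : ⋃ e ∈ N, {v | v ∈ e} = coveredVertices N := by
    ext v
    simp only [Set.mem_iUnion₂, Set.mem_ofPred_eq, coveredVertices]
    constructor
    · rintro ⟨e, he, hv⟩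
      obtain ⟨w, rfl⟩ := Sym2.mem_iff_exists.1 hv
      exact ⟨w, he⟩
    · rintro ⟨w, hw⟩
      exact ⟨_, hw, Sym2.mem_mk_left _ _⟩
  have ncard_endpoints : ∀ e ∈ N, {v | v ∈ e}.ncard = 2 := by
    rintro ⟨v, w⟩ he
    have hvw : v ≠ w := G.ne_of_adj (hN.1 he)
    rw [← Set.ncard_pair hvw]
    congr 1
    ext u
    exact Sym2.mem_iff
  have endpoints_disjoint : N.PairwiseDisjoint fun e => {v | v ∈ e} :=
    fun e he e' he' hne => Set.disjoint_left.2 (hN.2.2 e he e' he' hne)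
  rw [← biUnion_eq, N.toFinite.ncard_biUnion (fun _ _ => Set.toFinite _) endpoints_disjoint,
    finsum_mem_congr rfl ncard_endpoints, finsum_mem_eq_finite_toFinset_sum _ N.toFinite,
    Finset.sum_const, ← Set.ncard_eq_toFinset_card, hN.2.1, smul_eq_mul, mul_comm]

end IsMatchingSet

/-- The graph obtained from `G` by deleting the edges of all `M i`, joining the vertices covered by
`M i` to a new vertex `i`, and making the new vertices a clique. -/
def matchingExtension (G : SimpleGraph V) (M : ι → Set (Sym2 V)) : SimpleGraph (V ⊕ ι) where
  Adj
    | .inl v, .inl w => (G.deleteEdges (⋃ i, M i)).Adj v w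
    | .inl v, .inr i => v ∈ coveredVertices (M i)
    | .inr i, .inl v => v ∈ coveredVertices (M i)
    | .inr i, .inr j => (⊤ : SimpleGraph ι).Adj i j
  symm := ⟨by
    rintro (v | i) (w | j) h
    exacts [h.symm, h, h, h.symm]⟩
  loopless := ⟨by
    rintro (v | i) h
    exacts [h.ne rfl, h.ne rfl]⟩

variable {m : ℕ} {M : ι → Set (Sym2 V)}

lemma ncard_neighborSet_matchingExtension_inl [Finite V] [Finite ι]
    (hM : ∀ i, IsMatchingSet G m (M i)) (hdisj : Pairwise (Function.onFun Disjoint M)) (v : V) :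
    ((matchingExtension G M).neighborSet (.inl v)).ncard = (G.neighborSet v).ncard := by
  have biUnique : Relator.BiUnique fun (w : V) i => s(v, w) ∈ M i :=
    ⟨fun _ _ i hw hw' => (hM i).eq_of_mk_mem hw hw',
      fun w _ _ hi hj => hdisj.eq (Set.not_disjoint_iff.2 ⟨s(v, w), hi, hj⟩)⟩
  have kept_eq : {w | (matchingExtension G M).Adj (.inl v) (.inl w)} =
      G.neighborSet v \ {w | ∃ i, s(v, w) ∈ M i} := by
    ext w
    exact deleteEdges_adj.trans (and_congr_right' (not_congr Set.mem_iUnion))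
  have deleted_subset : {w | ∃ i, s(v, w) ∈ M i} ⊆ G.neighborSet v := fun w ⟨i, hi⟩ => (hM i).1 hi
  have new_ncard_eq : {i | (matchingExtension G M).Adj (.inl v) (.inr i)}.ncard =
      {w | ∃ i, s(v, w) ∈ M i}.ncard := (ncard_setOf_exists_eq_of_biUnique biUnique).symm
  rw [ncard_neighborSet_eq_add _ Set.isCompl_range_inl_range_inr Sum.inl_injective
    Sum.inr_injective, kept_eq, new_ncard_eq, Set.ncard_sdiff_add_ncard_of_subset deleted_subset]

lemma ncard_neighborSet_matchingExtension_inr [Finite V] [Fintype ι] {i : ι}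
    (hMi : IsMatchingSet G m (M i)) :
    ((matchingExtension G M).neighborSet (.inr i)).ncard + 1 = 2 * m + Fintype.card ι := by
  rw [ncard_neighborSet_eq_add _ Set.isCompl_range_inl_range_inr Sum.inl_injective
    Sum.inr_injective, add_assoc]
  exact congrArg₂ _ hMi.ncard_coveredVertices (ncard_neighborSet_top_add_one i)

end Matchings

section FinMatchingExtension

variable {n r : ℕ}

/-- The graph `matchingExtension G M` with the old vertices numbered first, as `IsExtension`
expects. -/
def finMatchingExtension (G : SimpleGraph (Fin n)) (M : Fin r → Set (Sym2 (Fin n))) :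
    SimpleGraph (Fin (n + r)) :=
  (matchingExtension G M).comap finSumFinEquiv.symm

variable (G : SimpleGraph (Fin n)) (M : Fin r → Set (Sym2 (Fin n)))

lemma comap_castAdd_finMatchingExtension_le :
    (finMatchingExtension G M).comap (Fin.castAdd r) ≤ G := by
  intro v w hvw
  simp only [finMatchingExtension, comap_adj, finSumFinEquiv_symm_apply_castAdd] at hvw
  exact deleteEdges_le _ hvw

lemma comap_natAdd_finMatchingExtension :
    (finMatchingExtension G M).comap (Fin.natAdd n) = ⊤ := by
  ext i j
  simp only [finMatchingExtension, comap_adj, finSumFinEquiv_symm_apply_natAdd]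
  rfl

variable {G M}

lemma isExtension_finMatchingExtension {m k : ℕ} (hM : ∀ i, IsMatchingSet G m (M i))
    (hdisj : Pairwise (Function.onFun Disjoint M)) (hk : k + 1 = 2 * m + r) :
    IsExtension n r k G (finMatchingExtension G M) := by
  refine ⟨fun v => ?_, fun i => ?_⟩
  · rw [finMatchingExtension, ncard_neighborSet_comap_equiv, finSumFinEquiv_symm_apply_castAdd,
      ncard_neighborSet_matchingExtension_inl hM hdisj]
  · have degree := ncard_neighborSet_matchingExtension_inr (hM i)
    rw [Fintype.card_fin, ← hk] at degree
    rw [finMatchingExtension, ncard_neighborSet_comap_equiv, finSumFinEquiv_symm_apply_natAdd]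
    exact Nat.succ_injective degree

end FinMatchingExtension

theorem disjoint_matchings_optimally_extendable (n r k : ℕ) (G : SimpleGraph (Fin n))
    (hr : 1 ≤ r) (hrk : r + 1 ≤ k) (hodd : Odd (k - r)) (heven : Even (r * k))
    (M : Fin r → Set (Sym2 (Fin n)))
    (hM : ∀ i, IsMatchingSet G ((k - r + 1) / 2) (M i))
    (hdisj : ∀ i j, i ≠ j → Disjoint (M i) (M j)) :
    editNumber n r k G = ((3 * (r * (k - r + 1) / 2) : ℕ) : ℕ∞) := by
  obtain ⟨t, ht⟩ := hodd
  have half_eq : (k - r + 1) / 2 = t + 1 := by omega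
  have count_eq : r * (k - r + 1) / 2 = r * (t + 1) := by
    rw [Nat.mul_div_assoc r (by omega), half_eq]
  rw [count_eq]
  simp only [half_eq] at hM
  have degree_eq : k + 1 = 2 * (t + 1) + r := by omega
  have extension := isExtension_finMatchingExtension hM (fun i j => hdisj i j) degree_eq
  exact extension.editNumber_eq_three_mul
    (comap_castAdd_finMatchingExtension_le G M) (comap_natAdd_finMatchingExtension G M) degree_eq
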